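/- Suppose α < −1 and m_{ij} > 0 for all i ≠ j. Define f' on the set of z ∈ ℝⁿ with pairwise distinct coordinates and w(z) ≠ 0 by f'(z)_i = w_i(z) / (∑_j m_j w_j(z)²)^{1/2}. Let x ∈ ℝⁿ have pairwise distinct coordinates, ∑_i m_i x_i = 0, ∑_i m_i x_i² = 1, and f'(x) = x (i.e., x is a normalized collinear central configuration). Then for every nonzero v ∈ ℝⁿ with ∑_i m_i v_i = 0 and ∑_i m_i x_i v_i = 0, one has ∑_i m_i v_i · (df'_x(v))_i < 0; in particular the derivative of f' at x is negative definite on the tangent space to the ellipsoid at x with respect to the inner product ⟨v, v'⟩ = ∑_i m_i v_i v'_i. -/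

import Mathlib

/-!
Write `w = wR n m M α` and `r(z) = (∑ⱼ mⱼ wⱼ(z)²)^{-1/2}`, so that `f' = r • w`. By the product
rule, `⟨v, df'_x v⟩ = r(x) ⟨v, dw_x v⟩ + dr_x(v) ⟨v, w(x)⟩`. Since `x = r(x) w(x)` with `r(x) > 0`,
the vector `w(x)` is parallel to `x`, hence orthogonal to the tangent vector `v`, and the second
term vanishes whatever `dr_x` is. As `t ↦ |t|^α t` has derivative `(α + 1)|t|^α` off `0`
(`hasDerivAt_abs_rpow_mul_self`), symmetrizing the double sum (`two_mul_sum_mul_sum_sub`) gives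
`2 ⟨v, dw_x v⟩ = (α + 1) ∑_{i ≠ j} m_{ij} |x_i - x_j|^α (v_i - v_j)²`.
With `α + 1 < 0` this is negative unless all `v_i` are equal, which together with
`∑ mᵢ vᵢ = 0` would force `v = 0`.
-/

/-- `w_i(z) = m_i⁻¹ ∑_{j≠i} m_{ij} |z_i - z_j|^α (z_i - z_j)` for collinear
configurations `z ∈ ℝⁿ`. -/
noncomputable def wR (n : ℕ) (m : Fin n → ℝ) (M : Fin n → Fin n → ℝ) (α : ℝ)
    (z : Fin n → ℝ) (i : Fin n) : ℝ :=
  (m i)⁻¹ * ∑ j ∈ Finset.univ.filter (fun j => j ≠ i),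
    M i j * |z i - z j| ^ α * (z i - z j)

/-- `f'(z)_i = w_i(z) / (∑ⱼ mⱼ wⱼ(z)²)^{1/2}`. -/
noncomputable def fprime (n : ℕ) (m : Fin n → ℝ) (M : Fin n → Fin n → ℝ) (α : ℝ)
    (z : Fin n → ℝ) (i : Fin n) : ℝ :=
  wR n m M α z i / Real.sqrt (∑ j, m j * (wR n m M α z j) ^ 2)

lemma hasDerivAt_abs_rpow_mul_self (α : ℝ) {t : ℝ} (ht : t ≠ 0) :
    HasDerivAt (fun s : ℝ => |s| ^ α * s) ((α + 1) * |t| ^ α) t := by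
  have hpos : 0 < |t| := abs_pos.mpr ht
  have h1 := ((hasDerivAt_abs ht).rpow_const (p := α) (Or.inl hpos.ne')).mul (hasDerivAt_id t)
  refine h1.congr_deriv ?_
  have h2 : |t| ^ α = |t| ^ (α - 1) * |t| := by
    rw [Real.rpow_sub_one hpos.ne', div_mul_cancel₀ _ hpos.ne']
  have h3 : (SignType.sign t : ℝ) * t = |t| := sign_mul_self t
  simp only [id]
  rw [h2, ← h3]
  ring

/-- The differential of `w` at a configuration with pairwise distinct coordinates. -/
lemma exists_hasFDerivAt_wR (n : ℕ) (m : Fin n → ℝ) (M : Fin n → Fin n → ℝ) (α : ℝ)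
    (x : Fin n → ℝ) (hx : ∀ i j, i ≠ j → x i ≠ x j) (i : Fin n) :
    ∃ D : (Fin n → ℝ) →L[ℝ] ℝ, HasFDerivAt (fun z => wR n m M α z i) D x ∧
      ∀ v, D v = (m i)⁻¹ * ∑ j ∈ Finset.univ.filter (fun j => j ≠ i),
        M i j * ((α + 1) * |x i - x j| ^ α) * (v i - v j) := by
  have hterm : ∀ j ∈ Finset.univ.filter (fun j => j ≠ i),
      HasFDerivAt (fun z : Fin n → ℝ => M i j * |z i - z j| ^ α * (z i - z j))
        (M i j • (((α + 1) * |x i - x j| ^ α) •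
          (ContinuousLinearMap.proj (R := ℝ) (φ := fun _ : Fin n => ℝ) i -
            ContinuousLinearMap.proj (R := ℝ) (φ := fun _ : Fin n => ℝ) j))) x := by
    intro j hj
    have hne : x i - x j ≠ 0 := sub_ne_zero.mpr (hx i j (Finset.mem_filter.mp hj).2.symm)
    have hsub : HasFDerivAt (fun z : Fin n → ℝ => z i - z j)
        (ContinuousLinearMap.proj (R := ℝ) (φ := fun _ : Fin n => ℝ) i -
          ContinuousLinearMap.proj (R := ℝ) (φ := fun _ : Fin n => ℝ) j) x :=
      (hasFDerivAt_apply i x).sub (hasFDerivAt_apply j x)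
    have h := ((hasDerivAt_abs_rpow_mul_self α hne).comp_hasFDerivAt x hsub).const_mul (M i j)
    refine h.congr_of_eventuallyEq (Filter.Eventually.of_forall fun z => ?_)
    simp [mul_assoc]
  refine ⟨_, (HasFDerivAt.fun_sum hterm).const_mul (m i)⁻¹, fun v => ?_⟩
  simp [mul_assoc]

lemma two_mul_sum_mul_sum_sub {n : ℕ} (c : Fin n → Fin n → ℝ) (hc : ∀ i j, c i j = c j i)
    (v : Fin n → ℝ) :
    2 * ∑ i, v i * ∑ j, c i j * (v i - v j) = ∑ i, ∑ j, c i j * (v i - v j) ^ 2 := by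
  have h1 : ∑ i, v i * ∑ j, c i j * (v i - v j) = ∑ i, ∑ j, v i * (c i j * (v i - v j)) := by
    simp only [Finset.mul_sum]
  have h2 : ∑ i, ∑ j, v i * (c i j * (v i - v j)) = ∑ i, ∑ j, v j * (c i j * (v j - v i)) := by
    rw [Finset.sum_comm]
    exact Finset.sum_congr rfl fun i _ => Finset.sum_congr rfl fun j _ => by rw [hc j i]
  rw [two_mul, h1]
  nth_rewrite 2 [h2]
  simp only [← Finset.sum_add_distrib]
  exact Finset.sum_congr rfl fun i _ => Finset.sum_congr rfl fun j _ => by ring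

/-- Suppose `α < -1` and `m_{ij} > 0` for all `i ≠ j`. If `x` is a
normalized collinear central configuration (a fixed point of `f'` on the ellipsoid),
then the derivative of `f'` at `x` is negative definite on the tangent space of the
ellipsoid at `x`, with respect to the kinetic inner product `⟨v,v'⟩ = ∑ mᵢ vᵢ v'ᵢ`. -/
theorem stmt8 (n : ℕ) (hn : 3 ≤ n) (m : Fin n → ℝ) (hm : ∀ i, 0 < m i)
    (M : Fin n → Fin n → ℝ) (hsym : ∀ i j, i ≠ j → M i j = M j i)
    (α : ℝ) (hα : α < -1) (hM : ∀ i j, i ≠ j → 0 < M i j)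
    (x : Fin n → ℝ) (hx : ∀ i j, i ≠ j → x i ≠ x j)
    (hcm : ∑ i, m i * x i = 0) (hI : ∑ i, m i * x i ^ 2 = 1)
    (hfix : fprime n m M α x = x) :
    ∃ L : (Fin n → ℝ) →L[ℝ] (Fin n → ℝ),
      HasFDerivAt (fprime n m M α) L x ∧
      ∀ v : Fin n → ℝ, v ≠ 0 → ∑ i, m i * v i = 0 → ∑ i, m i * x i * v i = 0 →
        ∑ i, m i * v i * L v i < 0 := by
  choose D hD hDv using exists_hasFDerivAt_wR n m M α x hx
  set Q : (Fin n → ℝ) → ℝ := fun z => ∑ j, m j * (wR n m M α z j) ^ 2 with hQ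
  have hfix' : ∀ i, wR n m M α x i / Real.sqrt (Q x) = x i := fun i => congrFun hfix i
  -- If the normalizing factor vanished, division by zero would give `x = 0`.
  have hN : Real.sqrt (Q x) ≠ 0 := by
    intro h0
    have hx0 : ∀ i, x i = 0 := fun i => by rw [← hfix' i, h0, div_zero]
    simp [hx0] at hI
  have hNpos : 0 < Real.sqrt (Q x) := lt_of_le_of_ne (Real.sqrt_nonneg _) hN.symm
  have hw : ∀ i, wR n m M α x i = Real.sqrt (Q x) * x i := fun i => by
    rw [← hfix' i, mul_div_cancel₀ _ hN]
  have hQd : DifferentiableAt ℝ Q x :=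
    DifferentiableAt.fun_sum fun j _ => ((hD j).differentiableAt.pow 2).const_mul (m j)
  have hr : DifferentiableAt ℝ (fun z => (Real.sqrt (Q z))⁻¹) x :=
    (hQd.sqrt (Real.sqrt_pos.mp hNpos).ne').inv hN
  obtain ⟨R, hR⟩ := hr
  refine ⟨ContinuousLinearMap.pi fun i =>
    wR n m M α x i • R + (Real.sqrt (Q x))⁻¹ • D i, ?_, ?_⟩
  · rw [hasFDerivAt_pi']
    intro i
    exact (hD i).mul hR
  intro v hv hv1 hv2
  -- The coefficients are set to `0` on the diagonal, where `wR` omits the term.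
  set c : Fin n → Fin n → ℝ := fun i j => if j = i then 0 else M i j * |x i - x j| ^ α with hc
  have hcsym : ∀ i j, c i j = c j i := by
    intro i j
    by_cases h : j = i
    · subst h; rfl
    · simp only [hc, if_neg h, if_neg (Ne.symm h)]
      rw [hsym j i h, abs_sub_comm]
  have hcpos : ∀ i j, j ≠ i → 0 < c i j := by
    intro i j h
    simp only [hc, if_neg h]
    exact mul_pos (hM i j h.symm)
      (Real.rpow_pos_of_pos (abs_pos.mpr (sub_ne_zero.mpr (hx i j h.symm))) _)
  have hcnn : ∀ i j, 0 ≤ c i j * (v i - v j) ^ 2 := by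
    intro i j
    by_cases h : j = i
    · simp [h]
    · exact mul_nonneg (hcpos i j h).le (sq_nonneg _)
  have hmD : ∀ i, m i * D i v = (α + 1) * ∑ j, c i j * (v i - v j) := by
    intro i
    rw [hDv, mul_inv_cancel_left₀ (hm i).ne', Finset.sum_filter, Finset.mul_sum]
    refine Finset.sum_congr rfl fun j _ => ?_
    by_cases h : j = i
    · simp [hc, h]
    · simp only [hc, if_neg h, ne_eq, h, not_false_eq_true, if_true]
      ring
  have hform : ∑ i, m i * v i * ((ContinuousLinearMap.pi fun i =>
      wR n m M α x i • R + (Real.sqrt (Q x))⁻¹ • D i) : (Fin n → ℝ) →L[ℝ] (Fin n → ℝ)) v i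
      = (Real.sqrt (Q x))⁻¹ * (α + 1) * ∑ i, v i * ∑ j, c i j * (v i - v j) := by
    have h1 : ∀ i, m i * v i * ((ContinuousLinearMap.pi fun i =>
        wR n m M α x i • R + (Real.sqrt (Q x))⁻¹ • D i) : (Fin n → ℝ) →L[ℝ] (Fin n → ℝ)) v i
        = Real.sqrt (Q x) * R v * (m i * x i * v i)
          + (Real.sqrt (Q x))⁻¹ * (α + 1) * (v i * ∑ j, c i j * (v i - v j)) := by
      intro i
      simp only [ContinuousLinearMap.pi_apply, add_apply,
        smul_apply, smul_eq_mul, hw i]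
      linear_combination (Real.sqrt (Q x))⁻¹ * v i * hmD i
    rw [Finset.sum_congr rfl fun i _ => h1 i, Finset.sum_add_distrib, ← Finset.mul_sum,
      ← Finset.mul_sum, hv2, mul_zero, zero_add]
  rw [hform]
  have hpos : 0 < ∑ i, ∑ j, c i j * (v i - v j) ^ 2 := by
    obtain ⟨a, b, hab⟩ : ∃ a b, v a ≠ v b := by
      by_contra! hconst
      refine hv (funext fun i => ?_)
      have hsum : (∑ j, m j) * v i = 0 := by
        rw [← hv1, Finset.sum_mul]
        exact Finset.sum_congr rfl fun j _ => by rw [hconst i j]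
      have hmpos : 0 < ∑ j, m j := Finset.sum_pos (fun j _ => hm j) ⟨i, Finset.mem_univ i⟩
      exact (mul_eq_zero.mp hsum).resolve_left hmpos.ne'
    refine Finset.sum_pos' (fun i _ => Finset.sum_nonneg fun j _ => hcnn i j)
      ⟨a, Finset.mem_univ a, Finset.sum_pos' (fun j _ => hcnn a j) ⟨b, Finset.mem_univ b, ?_⟩⟩
    exact mul_pos (hcpos a b fun h => hab (by rw [h])) (sq_pos_of_ne_zero (sub_ne_zero.mpr hab))
  have hE : 0 < ∑ i, v i * ∑ j, c i j * (v i - v j) := by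
    have := two_mul_sum_mul_sum_sub c hcsym v
    linarith
  exact mul_neg_of_neg_of_pos
    (mul_neg_of_pos_of_neg (inv_pos.mpr hNpos) (by linarith)) hE
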